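/- All the Beth companions of a quasivariety K are faithfully term equivalent relative to K. -/

import Mathlib

namespace Impl

open FirstOrder Language

universe u v

/-- A bundled algebra (first-order structure) for the language `L`. -/
structure Alg (L : FirstOrder.Language.{u, u}) : Type (u + 1) where
  carrier : Type u
  [str : L.Structure carrier]

attribute [instance] Alg.str

variable {L : FirstOrder.Language.{u, u}}

/-- The direct product of a family of algebras. -/
def Alg.pi {ι : Type u} (A : ι → Alg L) : Alg L where
  carrier := ∀ i, (A i).carrier
  str :=
    { funMap := fun {k} f v i => Structure.funMap f fun j => v j i
      RelMap := fun {k} r v => ∀ i, Structure.RelMap r fun j => v j i }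

/-- The binary direct product of two algebras. -/
def Alg.prod (A B : Alg L) : Alg L where
  carrier := A.carrier × B.carrier
  str :=
    { funMap := fun {k} f v =>
        (Structure.funMap f fun j => (v j).1, Structure.funMap f fun j => (v j).2)
      RelMap := fun {k} r v =>
        Structure.RelMap r (fun j => (v j).1) ∧ Structure.RelMap r fun j => (v j).2 }

/-- The ultraproduct of a family of algebras with respect to an ultrafilter. -/
def Alg.uprod {ι : Type u} (F : Ultrafilter ι) (A : ι → Alg L) : Alg L where
  carrier := Filter.Product (F : Filter ι) fun i => (A i).carrier
  str := inferInstance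

/-- Closure under isomorphic copies. -/
def ClosedUnderIso (K : Set (Alg L)) : Prop :=
  ∀ A B : Alg L, A ∈ K → Nonempty (A.carrier ≃[L] B.carrier) → B ∈ K

/-- Closure under subalgebras (up to the identification of a subalgebra with an embedding). -/
def ClosedUnderSub (K : Set (Alg L)) : Prop :=
  ∀ A B : Alg L, B ∈ K → Nonempty (A.carrier ↪[L] B.carrier) → A ∈ K

/-- Closure under direct products. -/
def ClosedUnderProd (K : Set (Alg L)) : Prop :=
  ∀ (ι : Type u) (A : ι → Alg L), (∀ i, A i ∈ K) → Alg.pi A ∈ K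

/-- Closure under finite direct products. -/
def ClosedUnderFinProd (K : Set (Alg L)) : Prop :=
  ∀ (ι : Type u), Finite ι → ∀ A : ι → Alg L, (∀ i, A i ∈ K) → Alg.pi A ∈ K

/-- Closure under homomorphic images. -/
def ClosedUnderHomImg (K : Set (Alg L)) : Prop :=
  ∀ A B : Alg L, A ∈ K → ∀ h : A.carrier →[L] B.carrier, Function.Surjective h → B ∈ K

/-- Closure under ultraproducts. -/
def ClosedUnderUprod (K : Set (Alg L)) : Prop :=
  ∀ (ι : Type u) (F : Ultrafilter ι) (A : ι → Alg L), (∀ i, A i ∈ K) → Alg.uprod F A ∈ K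

/-- A universal class: a class closed under isomorphic copies, subalgebras and ultraproducts. -/
def IsUniversalClass (K : Set (Alg L)) : Prop :=
  ClosedUnderIso K ∧ ClosedUnderSub K ∧ ClosedUnderUprod K

/-- A quasivariety: a class closed under isomorphic copies, subalgebras, direct products and
ultraproducts. -/
def IsQuasivariety (K : Set (Alg L)) : Prop :=
  ClosedUnderIso K ∧ ClosedUnderSub K ∧ ClosedUnderProd K ∧ ClosedUnderUprod K

/-- A variety: a class closed under homomorphic images, subalgebras and direct products. -/
def IsVariety (K : Set (Alg L)) : Prop :=
  ClosedUnderHomImg K ∧ ClosedUnderSub K ∧ ClosedUnderProd K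

/-- The least quasivariety containing `K`. -/
def QGen (K : Set (Alg L)) : Set (Alg L) :=
  ⋂₀ { M : Set (Alg L) | IsQuasivariety M ∧ K ⊆ M }

/-- The least variety containing `K`. -/
def VGen (K : Set (Alg L)) : Set (Alg L) :=
  ⋂₀ { M : Set (Alg L) | IsVariety M ∧ K ⊆ M }

/-- An elementary class: the class of all models of some first-order theory. -/
def IsElementary (K : Set (Alg L)) : Prop :=
  ∃ T : L.Theory, ∀ A : Alg L, A ∈ K ↔ ∀ φ ∈ T, A.carrier ⊨ φ

/-- Finite conjunctions of equations (with `⊤` as the empty conjunction). -/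
inductive IsConjEq {α : Type v} : ∀ {k : ℕ}, L.BoundedFormula α k → Prop
  | top {k} : IsConjEq (⊤ : L.BoundedFormula α k)
  | equal {k} (t₁ t₂ : L.Term (α ⊕ Fin k)) : IsConjEq (BoundedFormula.equal t₁ t₂)
  | inf {k} {φ ψ : L.BoundedFormula α k} : IsConjEq φ → IsConjEq ψ → IsConjEq (φ ⊓ ψ)

/-- Positive quantifier-free formulas: built from equations, `⊤` and `⊥` using `⊓` and `⊔`. -/
inductive IsPosQF {α : Type v} : ∀ {k : ℕ}, L.BoundedFormula α k → Prop
  | falsum {k} : IsPosQF (⊥ : L.BoundedFormula α k)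
  | top {k} : IsPosQF (⊤ : L.BoundedFormula α k)
  | equal {k} (t₁ t₂ : L.Term (α ⊕ Fin k)) : IsPosQF (BoundedFormula.equal t₁ t₂)
  | inf {k} {φ ψ : L.BoundedFormula α k} : IsPosQF φ → IsPosQF ψ → IsPosQF (φ ⊓ ψ)
  | sup {k} {φ ψ : L.BoundedFormula α k} : IsPosQF φ → IsPosQF ψ → IsPosQF (φ ⊔ ψ)

/-- Primitive positive (pp) formulas: existentially quantified finite conjunctions of
equations. -/
inductive IsPP {α : Type v} : ∀ {k : ℕ}, L.BoundedFormula α k → Prop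
  | of_conjEq {k} {φ : L.BoundedFormula α k} : IsConjEq φ → IsPP φ
  | ex {k} {φ : L.BoundedFormula α (k + 1)} : IsPP φ → IsPP φ.ex

/-- Existential positive formulas: existentially quantified positive quantifier-free
formulas. -/
inductive IsExistPos {α : Type v} : ∀ {k : ℕ}, L.BoundedFormula α k → Prop
  | of_posQF {k} {φ : L.BoundedFormula α k} : IsPosQF φ → IsExistPos φ
  | ex {k} {φ : L.BoundedFormula α (k + 1)} : IsExistPos φ → IsExistPos φ.ex

/-- Two formulas are equivalent in a class of algebras. -/
def EquivOn (K : Set (Alg L)) {α : Type v} (φ ψ : L.Formula α) : Prop :=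
  ∀ A : Alg L, A ∈ K → ∀ x : α → A.carrier, φ.Realize x ↔ ψ.Realize x

/-- A formula is preserved by homomorphisms in `K`. -/
def PreservedByHomsOn (K : Set (Alg L)) {α : Type v} (φ : L.Formula α) : Prop :=
  ∀ A B : Alg L, A ∈ K → B ∈ K → ∀ (h : A.carrier →[L] B.carrier) (x : α → A.carrier),
    φ.Realize x → φ.Realize fun a => h (x a)

/-- A formula is preserved by direct products in `K`. -/
def PreservedByProdsOn (K : Set (Alg L)) {α : Type v} (φ : L.Formula α) : Prop :=
  ∀ (ι : Type u) (A : ι → Alg L), (∀ i, A i ∈ K) → ∀ x : α → (Alg.pi A).carrier,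
    (∀ i, φ.Realize fun a => x a i) → φ.Realize x

/-- An `n`-ary partial function on a class of algebras `K`: a family assigning to each member of
`K` an `n`-ary partial function on its carrier. -/
def PartialFunOn (K : Set (Alg L)) (n : ℕ) :=
  ∀ (A : Alg L), A ∈ K → ((Fin n → A.carrier) →. A.carrier)

/-- A partial function on `K` is defined by the formula `φ(x₁, …, xₙ, y)` (the last variable
being the output) when its graph on each member of `K` is the solution set of `φ`. -/
def DefinedBy {K : Set (Alg L)} {n : ℕ} (f : PartialFunOn K n)
    (φ : L.Formula (Fin (n + 1))) : Prop :=
  ∀ (A : Alg L) (hA : A ∈ K) (x : Fin n → A.carrier) (b : A.carrier),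
    b ∈ f A hA x ↔ φ.Realize (Fin.snoc x b)

/-- The formula `φ(x₁, …, xₙ, y)` is functional in `K`: for all inputs there is at most one
output satisfying it. -/
def FunctionalIn (K : Set (Alg L)) {n : ℕ} (φ : L.Formula (Fin (n + 1))) : Prop :=
  ∀ A : Alg L, A ∈ K → ∀ (x : Fin n → A.carrier) (b₁ b₂ : A.carrier),
    φ.Realize (Fin.snoc x b₁) → φ.Realize (Fin.snoc x b₂) → b₁ = b₂

/-- A partial function on `K` is an operation of `K` when it is preserved by all homomorphisms
between members of `K`. -/
def IsOperationOn {K : Set (Alg L)} {n : ℕ} (f : PartialFunOn K n) : Prop :=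
  ∀ (A B : Alg L) (hA : A ∈ K) (hB : B ∈ K) (h : A.carrier →[L] B.carrier)
    (x : Fin n → A.carrier) (b : A.carrier),
    b ∈ f A hA x → h b ∈ f B hB fun i => h (x i)

/-- A partial function on `K` is implicit when it is defined by some formula. -/
def IsImplicit {K : Set (Alg L)} {n : ℕ} (f : PartialFunOn K n) : Prop :=
  ∃ φ : L.Formula (Fin (n + 1)), DefinedBy f φ

/-- An implicit operation of `K`: a partial function that is both implicit and an operation. -/
def IsImplicitOp {K : Set (Alg L)} {n : ℕ} (f : PartialFunOn K n) : Prop :=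
  IsImplicit f ∧ IsOperationOn f

/-- An implicit operation is extendable when every tuple in every member of `K` lies in the
domain of the operation in some extension inside `K`. -/
def Extendable {K : Set (Alg L)} {n : ℕ} (f : PartialFunOn K n) : Prop :=
  ∀ (A : Alg L) (hA : A ∈ K) (x : Fin n → A.carrier),
    ∃ (B : Alg L) (hB : B ∈ K) (e : A.carrier ↪[L] B.carrier),
      (f B hB fun i => e (x i)).Dom

/-- The dominion of a subset `s` of `M` relative to the class `K`. -/
def dominion (K : Set (Alg L)) (M : Type u) [L.Structure M] (s : Set M) : Set M :=
  { b | ∀ C : Alg L, C ∈ K → ∀ g h : M →[L] C.carrier, (∀ a ∈ s, g a = h a) → g b = h b }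

/-- The strong epimorphism surjectivity property. -/
def StrongES (K : Set (Alg L)) : Prop :=
  ∀ (A B : Alg L), A ∈ K → B ∈ K → ∀ (f : A.carrier →[L] B.carrier) (b : B.carrier),
    b ∉ Set.range f →
      ∃ C : Alg L, C ∈ K ∧ ∃ g h : B.carrier →[L] C.carrier,
        (∀ a : A.carrier, g (f a) = h (f a)) ∧ g b ≠ h b

/-- The weak epimorphism surjectivity property: every `K`-epimorphism between finitely
generated members of `K` is surjective. -/
def WeakES (K : Set (Alg L)) : Prop :=
  ∀ (A B : Alg L), A ∈ K → B ∈ K →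
    Structure.FG L A.carrier → Structure.FG L B.carrier →
      ∀ f : A.carrier →[L] B.carrier,
        (∀ C : Alg L, C ∈ K → ∀ g h : B.carrier →[L] C.carrier,
          (∀ a : A.carrier, g (f a) = h (f a)) → g = h) →
        Function.Surjective f

/-- The amalgamation property. -/
def HasAmalgamation (K : Set (Alg L)) : Prop :=
  ∀ (A B C : Alg L), A ∈ K → B ∈ K → C ∈ K →
    ∀ (f : A.carrier ↪[L] B.carrier) (g : A.carrier ↪[L] C.carrier),
      ∃ D : Alg L, D ∈ K ∧ ∃ (f' : B.carrier ↪[L] D.carrier) (g' : C.carrier ↪[L] D.carrier),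
        ∀ a : A.carrier, f' (f a) = g' (g a)

/-- A finitely presented member of `K`: an algebra in `K` with a finite presentation, phrased
through the usual universal property of `T(X)/Cg_K(Y)`. -/
def FinitelyPresentedIn (K : Set (Alg L)) (B : Alg L) : Prop :=
  B ∈ K ∧ ∃ (m : ℕ) (Y : Finset (L.Term (Fin m) × L.Term (Fin m))) (b : Fin m → B.carrier),
    Substructure.closure L (Set.range b) = ⊤ ∧
    (∀ p ∈ Y, p.1.realize b = p.2.realize b) ∧
    ∀ C : Alg L, C ∈ K → ∀ x : Fin m → C.carrier,
      (∀ p ∈ Y, p.1.realize x = p.2.realize x) →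
        ∃ g : B.carrier →[L] C.carrier, ∀ i, g (b i) = x i

/-- Subdirectly irreducible relative to `K`. -/
def IsRSI (K : Set (Alg L)) (A : Alg L) : Prop :=
  A ∈ K ∧ ∀ (ι : Type u) (B : ι → Alg L), (∀ i, B i ∈ K) →
    ∀ h : A.carrier ↪[L] (Alg.pi B).carrier,
      (∀ i, Function.Surjective fun a => h a i) →
        ∃ i, Function.Bijective fun a => h a i

/-- Finitely subdirectly irreducible relative to `K`. -/
def IsRFSI (K : Set (Alg L)) (A : Alg L) : Prop :=
  A ∈ K ∧ ∀ (ι : Type u), Finite ι → ∀ B : ι → Alg L, (∀ i, B i ∈ K) →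
    ∀ h : A.carrier ↪[L] (Alg.pi B).carrier,
      (∀ i, Function.Surjective fun a => h a i) →
        ∃ i, Function.Bijective fun a => h a i

/-- A congruence on an algebra: an equivalence relation compatible with all the operations. -/
def IsCongruenceOn (A : Alg L) (θ : A.carrier → A.carrier → Prop) : Prop :=
  Equivalence θ ∧
    ∀ (k : ℕ) (f : L.Functions k) (x y : Fin k → A.carrier),
      (∀ i, θ (x i) (y i)) → θ (Structure.funMap f x) (Structure.funMap f y)

/-- The quotient of an algebra by (the setoid of) an equivalence relation; when the relation is
a congruence this is the quotient algebra. -/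
noncomputable def Alg.quot (A : Alg L) (θ : A.carrier → A.carrier → Prop) (h : Equivalence θ) :
    Alg L where
  carrier := Quotient (⟨θ, h⟩ : Setoid A.carrier)
  str :=
    { funMap := fun {k} f v => Quotient.mk _ (Structure.funMap f fun i => (v i).out)
      RelMap := fun {k} r v => Structure.RelMap r fun i => (v i).out }

/-- A `K`-congruence of `A`: a congruence whose quotient lies in `K`. -/
def IsRelCong (K : Set (Alg L)) (A : Alg L) (θ : A.carrier → A.carrier → Prop) : Prop :=
  ∃ h : IsCongruenceOn A θ, Alg.quot A θ h.1 ∈ K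

/-- The join of two relations in the lattice of `K`-congruences of `A`. -/
def relCongJoin (K : Set (Alg L)) (A : Alg L)
    (θ φ : A.carrier → A.carrier → Prop) (x y : A.carrier) : Prop :=
  ∀ ρ : A.carrier → A.carrier → Prop, IsRelCong K A ρ →
    (∀ a b, θ a b → ρ a b) → (∀ a b, φ a b → ρ a b) → ρ x y

/-- Relative congruence distributivity: the lattice of `K`-congruences of each member of `K`
is distributive. -/
def RelCongDistributive (K : Set (Alg L)) : Prop :=
  ∀ A : Alg L, A ∈ K → ∀ θ φ ψ : A.carrier → A.carrier → Prop,
    IsRelCong K A θ → IsRelCong K A φ → IsRelCong K A ψ →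
      ∀ x y : A.carrier,
        (θ x y ∧ relCongJoin K A φ ψ x y) ↔
          relCongJoin K A (fun a b => θ a b ∧ φ a b) (fun a b => θ a b ∧ ψ a b) x y

/-- The join of two relations in the lattice of congruences of `A`. -/
def congJoin (A : Alg L) (θ φ : A.carrier → A.carrier → Prop) (x y : A.carrier) : Prop :=
  ∀ ρ : A.carrier → A.carrier → Prop, IsCongruenceOn A ρ →
    (∀ a b, θ a b → ρ a b) → (∀ a b, φ a b → ρ a b) → ρ x y

/-- Congruence permutability for all members of a class. -/
def CongPermutableClass (K : Set (Alg L)) : Prop :=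
  ∀ A : Alg L, A ∈ K → ∀ θ φ : A.carrier → A.carrier → Prop,
    IsCongruenceOn A θ → IsCongruenceOn A φ →
      ∀ x y : A.carrier, (∃ z, θ x z ∧ φ z y) ↔ ∃ z, φ x z ∧ θ z y

/-- Congruence distributivity for all members of a class. -/
def CongDistributiveClass (K : Set (Alg L)) : Prop :=
  ∀ A : Alg L, A ∈ K → ∀ θ φ ψ : A.carrier → A.carrier → Prop,
    IsCongruenceOn A θ → IsCongruenceOn A φ → IsCongruenceOn A ψ →
      ∀ x y : A.carrier,
        (θ x y ∧ congJoin A φ ψ x y) ↔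
          congJoin A (fun a b => θ a b ∧ φ a b) (fun a b => θ a b ∧ ψ a b) x y

/-- The congruence extension property. -/
def HasCEP (K : Set (Alg L)) : Prop :=
  ∀ A B : Alg L, A ∈ K → B ∈ K → ∀ e : A.carrier ↪[L] B.carrier,
    ∀ θ : A.carrier → A.carrier → Prop, IsCongruenceOn A θ →
      ∃ ρ : B.carrier → B.carrier → Prop, IsCongruenceOn B ρ ∧
        ∀ x y : A.carrier, θ x y ↔ ρ (e x) (e y)

/-- The language consisting of one new function symbol `gᵢ` of arity `ar i` for each `i`. -/
def newLang {ι : Type u} (ar : ι → ℕ) : FirstOrder.Language.{u, u} where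
  Functions := fun n => { i : ι // ar i = n }
  Relations := fun _ => PEmpty

/-- The `L`-reduct of an algebra in an expanded language `L.sum N`. -/
def algReduct {N : FirstOrder.Language.{u, u}} (B : Alg (L.sum N)) : Alg L where
  carrier := B.carrier
  str := (LHom.sumInl : L →ᴸ L.sum N).reduct B.carrier

/-- The class `K[L_F]` of expansions of members of `K` on which each operation in the family
`f` is total, interpreting the new symbol `gᵢ` as `f i`. -/
def expClass (K : Set (Alg L)) {ι : Type u} (ar : ι → ℕ)
    (f : ∀ i, PartialFunOn K (ar i)) : Set (Alg (L.sum (newLang ar))) :=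
  { B | ∃ hB : algReduct B ∈ K,
      ∀ (i : ι) (x : Fin (ar i) → B.carrier),
        Structure.funMap (L := L.sum (newLang ar)) (M := B.carrier)
            (Sum.inr ⟨i, rfl⟩ : (L.sum (newLang ar)).Functions (ar i)) x
          ∈ f i (algReduct B) hB x }

/-- Closure under subalgebras (and isomorphic copies) inside a fixed language. -/
def SClosure {L' : FirstOrder.Language.{u, u}} (S : Set (Alg L')) : Set (Alg L') :=
  { A | ∃ B ∈ S, Nonempty (A.carrier ↪[L'] B.carrier) }

/-- Membership in `ext_pp(K)`: an extendable implicit operation defined by a pp formula. -/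
def InExtPP {K : Set (Alg L)} {n : ℕ} (f : PartialFunOn K n) : Prop :=
  IsOperationOn f ∧ (∃ φ : L.Formula (Fin (n + 1)), IsPP φ ∧ DefinedBy f φ) ∧ Extendable f

/-- `M` is the pp expansion of `K` induced by the family `f` of extendable pp-definable
implicit operations, with one new symbol of arity `ar i` for each `i`. -/
def IsPPExpansionVia (K : Set (Alg L)) {ι : Type u} (ar : ι → ℕ)
    (f : ∀ i, PartialFunOn K (ar i)) (M : Set (Alg (L.sum (newLang ar)))) : Prop :=
  (∀ i, 0 < ar i) ∧ (∀ i, InExtPP (f i)) ∧ M = SClosure (expClass K ar f)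

/-- Every implicit operation of `K` is interpolated in `M` by a set of terms of the expanded
language. -/
def InterpolatesByTermsInExp (K : Set (Alg L)) {ι : Type u} {ar : ι → ℕ}
    (M : Set (Alg (L.sum (newLang ar)))) : Prop :=
  ∀ n : ℕ, 0 < n → ∀ g : PartialFunOn K n, IsImplicitOp g →
    ∃ T : Set ((L.sum (newLang ar)).Term (Fin n)),
      ∀ A : Alg (L.sum (newLang ar)), A ∈ M →
        ∀ (hA : algReduct A ∈ K) (x : Fin n → A.carrier) (b : A.carrier),
          b ∈ g (algReduct A) hA x → ∃ t ∈ T, t.realize x = b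

/-- `M` is a Beth companion of `K` (via the given expansion datum). -/
def IsBethCompanionVia (K : Set (Alg L)) {ι : Type u} (ar : ι → ℕ)
    (f : ∀ i, PartialFunOn K (ar i)) (M : Set (Alg (L.sum (newLang ar)))) : Prop :=
  IsPPExpansionVia K ar f M ∧ InterpolatesByTermsInExp K M

/-- A pp expansion is congruence preserving when the `M`-congruences of each member of `M`
coincide with the `K`-congruences of its `L`-reduct. -/
def CongPreserving {N : FirstOrder.Language.{u, u}} (K : Set (Alg L))
    (M : Set (Alg (L.sum N))) : Prop :=
  ∀ A : Alg (L.sum N), A ∈ M → ∀ θ : A.carrier → A.carrier → Prop,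
    IsRelCong M A θ ↔ IsRelCong K (algReduct A) θ

/-- Reinterpretation of an `L₁`-algebra as an `L₂`-algebra along a map sending `L₂`-symbols to
`L₁`-terms (both languages are assumed to be purely functional). -/
def reinterpret {L₁ L₂ : FirstOrder.Language.{u, u}} (ρ : ∀ n, L₂.Functions n → L₁.Term (Fin n))
    (A : Alg L₁) : Alg L₂ where
  carrier := A.carrier
  str :=
    { funMap := fun {k} s x => (ρ k s).realize x
      RelMap := fun {k} _ _ => False }

/-- Two expansions of the same base language `L` are faithfully term equivalent relative to
`L`. -/
def FaithfullyTermEquivRel (L : FirstOrder.Language.{u, u}) {N₁ N₂ : FirstOrder.Language.{u, u}}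
    (M₁ : Set (Alg (L.sum N₁))) (M₂ : Set (Alg (L.sum N₂))) : Prop :=
  ∃ (τ : ∀ n, (L.sum N₁).Functions n → (L.sum N₂).Term (Fin n))
    (ρ : ∀ n, (L.sum N₂).Functions n → (L.sum N₁).Term (Fin n)),
    (∀ (n : ℕ) (s : L.Functions n),
      τ n (Sum.inl s) = Term.func (Sum.inl s : (L.sum N₂).Functions n) Term.var) ∧
    (∀ (n : ℕ) (s : L.Functions n),
      ρ n (Sum.inl s) = Term.func (Sum.inl s : (L.sum N₁).Functions n) Term.var) ∧
    (∀ A : Alg (L.sum N₁), A ∈ M₁ → reinterpret ρ A ∈ M₂) ∧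
    (∀ B : Alg (L.sum N₂), B ∈ M₂ → reinterpret τ B ∈ M₁) ∧
    (∀ A : Alg (L.sum N₁), A ∈ M₁ → reinterpret τ (reinterpret ρ A) = A) ∧
    (∀ B : Alg (L.sum N₂), B ∈ M₂ → reinterpret ρ (reinterpret τ B) = B)

/-!
Any two families of extendable implicit operations can be made total at once: every member of `K`
embeds into a member of `K` on which all of them are total, namely the union of a chain whose
successor steps are ultraproducts. Graphs of pp-definable operations are closed under direct
products, so in a Beth companion an interpolating set of terms for such an operation can be cut
down to one term: if every term failed somewhere, the product of the counterexamples would defeat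
all of them. Hence each companion expresses the basic operations of the other by terms, and on
algebras where both families are total the two resulting translations are mutually inverse. Both
the round-trip identities and membership in the companions then pass to subalgebras.
-/

section Ultraproducts

open Filter

variable {I : Type u} {F : Ultrafilter I}

/-- The class in the ultraproduct of an element of the direct product. -/
def uprodMk (F : Ultrafilter I) {B : I → Alg L} (b : ∀ i, (B i).carrier) :
    (Alg.uprod F B).carrier :=
  (Quotient.mk _ b : Filter.Product (F : Filter I) fun i => (B i).carrier)

/-- The embedding into an ultraproduct induced by maps into the factors that need not be
homomorphisms: each instance of the homomorphism and injectivity conditions is only required for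
almost all factors. -/
def uprodEmbedding [L.IsAlgebraic] {A : Alg L} {B : I → Alg L}
    (g : ∀ i, A.carrier → (B i).carrier)
    (map_fun : ∀ {n : ℕ} (s : L.Functions n) (x : Fin n → A.carrier),
      ∀ᶠ i in F, g i (Structure.funMap s x) = Structure.funMap s fun j => g i (x j))
    (injective : ∀ a b, (∀ᶠ i in F, g i a = g i b) → a = b) :
    A.carrier ↪[L] (Alg.uprod F B).carrier :=
  let h : A.carrier →[L] (Alg.uprod F B).carrier :=
    { toFun := fun a => uprodMk F fun i => g i a
      map_fun' := fun s x =>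
        Eq.trans (Quotient.sound (map_fun s x))
          (Ultraproduct.funMap_cast (M := fun i => (B i).carrier) s fun j i => g i (x j)).symm
      map_rel' := fun r => isEmptyElim r }
  Embedding.ofInjective (f := h) fun a b hab => injective a b (Quotient.exact hab)

variable {K : Set (Alg L)} {n : ℕ} {f : PartialFunOn K n}
  {B : I → Alg L} [∀ i, Nonempty (B i).carrier]

theorem IsImplicit.uprodMk_mem_iff (hf : IsImplicit f) (hB : ∀ i, B i ∈ K)
    (hU : Alg.uprod F B ∈ K) (x : Fin n → ∀ i, (B i).carrier) (b : ∀ i, (B i).carrier) :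
    (uprodMk F b ∈ f (Alg.uprod F B) hU fun j => uprodMk F (x j)) ↔
      ∀ᶠ i in F, b i ∈ f (B i) (hB i) fun j => x j i := by
  obtain ⟨φ, hφ⟩ := hf
  have los := Ultraproduct.realize_formula_cast (u := F) (M := fun i => (B i).carrier) φ
    (Fin.snoc x b)
  have snoc_mk : (fun k => uprodMk F ((Fin.snoc x b : Fin (n + 1) → ∀ i, (B i).carrier) k)) =
      Fin.snoc (fun j => uprodMk F (x j)) (uprodMk F b) := Fin.comp_snoc (uprodMk F) x b
  have snoc_eval (i : I) : (fun k => (Fin.snoc x b : Fin (n + 1) → ∀ i, (B i).carrier) k i) =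
      Fin.snoc (fun j => x j i) (b i) := Fin.comp_snoc (fun c : ∀ i, (B i).carrier => c i) x b
  rw [hφ, ← snoc_mk]
  refine los.trans (eventually_congr (Eventually.of_forall fun i => ?_))
  rw [snoc_eval, hφ]

theorem IsImplicit.dom_uprod (hf : IsImplicit f) (hB : ∀ i, B i ∈ K) (hU : Alg.uprod F B ∈ K)
    (x : Fin n → ∀ i, (B i).carrier)
    (hdom : ∀ᶠ i in F, (f (B i) (hB i) fun j => x j i).Dom) :
    (f (Alg.uprod F B) hU fun j => uprodMk F (x j)).Dom := by
  simp only [Part.dom_iff_mem] at hdom ⊢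
  obtain ⟨b, hb⟩ := skolem.1 hdom
  exact ⟨uprodMk F b, (hf.uprodMk_mem_iff hB hU x b).2 hb⟩

end Ultraproducts

section Chains

open Filter

variable [L.IsAlgebraic] {K : Set (Alg L)}

theorem mem_of_monotone_range_cover (hsub : ClosedUnderSub K) (huprod : ClosedUnderUprod K)
    {ι : Type u} [Preorder ι] [IsDirectedOrder ι] [Nonempty ι] {D : Alg L} {G : ι → Alg L}
    [∀ i, Nonempty (G i).carrier] (hG : ∀ i, G i ∈ K) (o : ∀ i, (G i).carrier ↪[L] D.carrier)
    (hmono : Monotone fun i => Set.range (o i)) (hcover : ∀ d, ∃ i, d ∈ Set.range (o i)) :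
    D ∈ K := by
  let F : Ultrafilter ι := Ultrafilter.of atTop
  -- `g i` inverts `o i` on its range and takes junk values elsewhere; any given element of `D`
  -- lies in that range for almost all `i`.
  let g (i : ι) : D.carrier → (G i).carrier := Function.invFun (o i)
  have o_g (d : D.carrier) : ∀ᶠ i in F, o i (g i d) = d := by
    obtain ⟨i₀, hi₀⟩ := hcover d
    exact Ultrafilter.of_le _ <| (eventually_ge_atTop i₀).mono fun i hi =>
      Function.invFun_eq (hmono hi hi₀)
  refine hsub D _ (huprod ι F G hG) ⟨uprodEmbedding g (fun s x => ?_) fun a b hab => ?_⟩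
  · filter_upwards [o_g (Structure.funMap s x), eventually_all.2 fun j => o_g (x j)] with i hs hx
    apply (o i).injective
    rw [hs, (o i).map_fun]
    exact congrArg _ (funext fun j => (hx j).symm)
  · obtain ⟨i, hi, ha, hb⟩ := (hab.and ((o_g a).and (o_g b))).exists
    rw [← ha, hi, hb]

theorem exists_mem_limit_of_chain (hsub : ClosedUnderSub K) (huprod : ClosedUnderUprod K)
    {G : ℕ → Alg L} (hG : ∀ n, G n ∈ K) [Nonempty (G 0).carrier]
    (e : ∀ n, (G n).carrier ↪[L] (G (n + 1)).carrier) :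
    ∃ D ∈ K, ∃ o : ∀ n, (G n).carrier ↪[L] D.carrier,
      (∀ n a, o (n + 1) (e n a) = o n a) ∧
        ∀ {m : ℕ} (x : Fin m → D.carrier),
          ∃ (n : ℕ) (y : Fin m → (G n).carrier), x = fun j => o n (y j) := by
  let E := DirectedSystem.natLERec (G' := fun n => (G n).carrier) e
  let D : Alg L := ⟨Language.DirectLimit (fun n => (G n).carrier) E⟩
  let o (n : ℕ) : (G n).carrier ↪[L] D.carrier :=
    Language.DirectLimit.of L ℕ (fun n => (G n).carrier) E n
  have o_E {m n : ℕ} (h : m ≤ n) (a : (G m).carrier) : o n (E m n h a) = o m a :=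
    Language.DirectLimit.of_f
  have E_succ (n : ℕ) (a : (G n).carrier) : E n (n + 1) n.le_succ a = e n a := by
    simp only [E, DirectedSystem.coe_natLERec, Nat.leRecOn_succ']
  have nonempty (n : ULift.{u} ℕ) : Nonempty (G n.down).carrier :=
    .map (E 0 n.down (Nat.zero_le _)) ‹_›
  refine ⟨D, ?_, o, fun n a => E_succ n a ▸ o_E n.le_succ a,
    Language.DirectLimit.exists_quotient_mk'_sigma_mk'_eq (fun n => (G n).carrier) E⟩
  refine mem_of_monotone_range_cover hsub huprod (ι := ULift.{u} ℕ) (fun n => hG n.down)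
    (fun n => o n.down) ?_ fun d => ?_
  · rintro m n hmn _ ⟨a, rfl⟩
    exact ⟨E m.down n.down hmn a, o_E hmn a⟩
  · obtain ⟨n, a, ha⟩ := Language.DirectLimit.exists_of d
    exact ⟨⟨n⟩, a, ha⟩

end Chains

section TotalExtensions

open Filter

variable {K : Set (Alg L)}

theorem IsOperationOn.dom_map {n : ℕ} {f : PartialFunOn K n} (hf : IsOperationOn f) {A B : Alg L}
    (hA : A ∈ K) (hB : B ∈ K) (h : A.carrier →[L] B.carrier) {x : Fin n → A.carrier}
    (hdom : (f A hA x).Dom) : (f B hB fun i => h (x i)).Dom :=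
  Part.dom_iff_mem.2 ⟨_, hf A B hA hB h x _ (Part.get_mem hdom)⟩

variable {ι : Type u} {ar : ι → ℕ} {f : ∀ i, PartialFunOn K (ar i)}

theorem exists_embedding_dom_of_finset (hop : ∀ i, IsOperationOn (f i))
    (hext : ∀ i, Extendable (f i)) {A : Alg L} (hA : A ∈ K)
    (s : Finset (Σ i, Fin (ar i) → A.carrier)) :
    ∃ (B : Alg L) (hB : B ∈ K) (e : A.carrier ↪[L] B.carrier),
      ∀ p ∈ s, (f p.1 B hB fun j => e (p.2 j)).Dom := by
  classical
  induction s using Finset.induction_on with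
  | empty => exact ⟨A, hA, Embedding.refl L _, by simp⟩
  | insert p s _ ih =>
    obtain ⟨B, hB, e, hs⟩ := ih
    obtain ⟨C, hC, e', hp⟩ := hext p.1 B hB fun j => e (p.2 j)
    refine ⟨C, hC, e'.comp e, Finset.forall_mem_insert _ _ _ |>.2 ⟨hp, fun q hq => ?_⟩⟩
    exact (hop q.1).dom_map hB hC e'.toHom (hs q hq)

variable [L.IsAlgebraic]

theorem exists_embedding_dom_on_range (huprod : ClosedUnderUprod K)
    (hf : ∀ i, IsImplicitOp (f i)) (hext : ∀ i, Extendable (f i)) {A : Alg L} (hA : A ∈ K)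
    [Nonempty A.carrier] :
    ∃ (B : Alg L) (hB : B ∈ K) (e : A.carrier ↪[L] B.carrier),
      ∀ i (x : Fin (ar i) → A.carrier), (f i B hB fun j => e (x j)).Dom := by
  choose B hB e hdom using exists_embedding_dom_of_finset (fun i => (hf i).2) hext hA
  have nonempty (s : Finset (Σ i, Fin (ar i) → A.carrier)) : Nonempty (B s).carrier :=
    .map (e s) ‹_›
  let F : Ultrafilter (Finset (Σ i, Fin (ar i) → A.carrier)) := Ultrafilter.of atTop
  let E : A.carrier ↪[L] (Alg.uprod F B).carrier :=
    uprodEmbedding (fun s => e s) (fun s x => .of_forall fun i => (e i).map_fun s x)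
      fun a b hab => let ⟨s, hs⟩ := hab.exists; (e s).injective hs
  refine ⟨_, huprod _ F B hB, E, fun i x => ?_⟩
  refine (hf i).1.dom_uprod hB _ (fun j s => e s (x j)) ?_
  exact Ultrafilter.of_le _ <| (eventually_ge_atTop {⟨i, x⟩}).mono fun s hs =>
    hdom s ⟨i, x⟩ (Finset.singleton_subset_iff.1 hs)

/-- The algebra `C` belongs to `K` and every operation of the family `f` is total on it. -/
def IsTotalOn (f : ∀ i, PartialFunOn K (ar i)) (C : Alg L) : Prop :=
  ∃ hC : C ∈ K, ∀ i x, (f i C hC x).Dom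

theorem exists_embedding_isTotalOn (hsub : ClosedUnderSub K) (huprod : ClosedUnderUprod K)
    (har : ∀ i, 0 < ar i) (hf : ∀ i, IsImplicitOp (f i)) (hext : ∀ i, Extendable (f i))
    {A : Alg L} (hA : A ∈ K) :
    ∃ C, IsTotalOn f C ∧ Nonempty (A.carrier ↪[L] C.carrier) := by
  rcases isEmpty_or_nonempty A.carrier with hempty | hne
  · exact ⟨A, ⟨hA, fun i x => (hempty.false (x ⟨0, har i⟩)).elim⟩, ⟨Embedding.refl L _⟩⟩
  have extend (B : {B : Alg L // B ∈ K ∧ Nonempty B.carrier}) :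
      ∃ (C : {C : Alg L // C ∈ K ∧ Nonempty C.carrier}) (e : B.1.carrier ↪[L] C.1.carrier),
        ∀ i (x : Fin (ar i) → B.1.carrier), (f i C.1 C.2.1 fun j => e (x j)).Dom := by
    obtain ⟨B, hB, hBne⟩ := B
    obtain ⟨C, hC, e, hdom⟩ := exists_embedding_dom_on_range huprod hf hext hB
    exact ⟨⟨C, hC, hBne.map e⟩, e, hdom⟩
  choose next e hdom using extend
  let G : ℕ → {B : Alg L // B ∈ K ∧ Nonempty B.carrier} :=
    Nat.rec ⟨A, hA, hne⟩ fun _ B => next B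
  obtain ⟨C, hC, o, o_succ, cover⟩ := exists_mem_limit_of_chain hsub huprod
    (G := fun n => (G n).1) (fun n => (G n).2.1) fun n => e (G n)
  refine ⟨C, ⟨hC, fun i x => ?_⟩, ⟨o 0⟩⟩
  obtain ⟨n, y, rfl⟩ := cover x
  simpa only [Embedding.coe_toHom, o_succ] using
    (hf i).2.dom_map (G (n + 1)).2.1 hC (o (n + 1)).toHom (hdom (G n) i y)

end TotalExtensions

section Products

variable {I : Type u}

/-- The projection of a direct product of algebras onto a factor. -/
def piProj (B : I → Alg L) (i : I) : (Alg.pi B).carrier →[L] (B i).carrier where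
  toFun b := b i
  map_fun' _ _ := rfl
  map_rel' _ _ h := h i

theorem realize_pi_apply (B : I → Alg L) {α : Type v} (t : L.Term α)
    (x : α → (Alg.pi B).carrier) (i : I) :
    (t.realize x : (Alg.pi B).carrier) i = t.realize fun a => x a i :=
  (HomClass.realize_term (piProj B i)).symm

theorem IsConjEq.realize_pi (B : I → Alg L) {α : Type v} {k : ℕ} {φ : L.BoundedFormula α k}
    (hφ : IsConjEq φ) (x : α → (Alg.pi B).carrier) (y : Fin k → (Alg.pi B).carrier)
    (h : ∀ i, φ.Realize (fun a => x a i) fun a => y a i) : φ.Realize x y := by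
  induction hφ with
  | top => exact BoundedFormula.realize_top.2 trivial
  | equal t₁ t₂ =>
    have elim_apply (i : I) : (fun a => (Sum.elim x y a : (Alg.pi B).carrier) i) =
        Sum.elim (fun a => x a i) fun a => y a i := Sum.comp_elim (piProj B i) x y
    refine funext fun i => ?_
    have hi : t₁.realize _ = t₂.realize _ := h i
    rw [← elim_apply] at hi
    exact (realize_pi_apply B t₁ _ i).trans (hi.trans (realize_pi_apply B t₂ _ i).symm)
  | inf _ _ ih₁ ih₂ =>
    simp only [BoundedFormula.realize_inf] at h ⊢
    exact ⟨ih₁ fun i => (h i).1, ih₂ fun i => (h i).2⟩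

theorem IsPP.realize_pi (B : I → Alg L) {α : Type v} {k : ℕ} {φ : L.BoundedFormula α k}
    (hφ : IsPP φ) (x : α → (Alg.pi B).carrier) (y : Fin k → (Alg.pi B).carrier)
    (h : ∀ i, φ.Realize (fun a => x a i) fun a => y a i) : φ.Realize x y := by
  induction hφ with
  | of_conjEq hφ => exact hφ.realize_pi B x y h
  | ex _ ih =>
    simp only [BoundedFormula.realize_ex] at h ⊢
    choose b hb using h
    refine ⟨b, ih _ fun i => ?_⟩
    have snoc_apply : (fun a => (Fin.snoc y b : Fin _ → (Alg.pi B).carrier) a i) =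
        Fin.snoc (fun a => y a i) (b i) := Fin.comp_snoc (piProj B i) y b
    exact snoc_apply ▸ hb i

variable {K : Set (Alg L)}

/-- The partial function `f` on `K` is defined by a primitive positive formula. -/
def IsPPDefinable {n : ℕ} (f : PartialFunOn K n) : Prop :=
  ∃ φ : L.Formula (Fin (n + 1)), IsPP φ ∧ DefinedBy f φ

theorem IsPPDefinable.isImplicit {n : ℕ} {f : PartialFunOn K n} (hf : IsPPDefinable f) :
    IsImplicit f :=
  let ⟨φ, _, hφ⟩ := hf
  ⟨φ, hφ⟩

theorem InExtPP.isImplicitOp {n : ℕ} {f : PartialFunOn K n} (hf : InExtPP f) : IsImplicitOp f :=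
  ⟨IsPPDefinable.isImplicit hf.2.1, hf.1⟩

theorem IsPPDefinable.mem_pi {n : ℕ} {f : PartialFunOn K n} (hf : IsPPDefinable f)
    {B : I → Alg L} (hB : ∀ i, B i ∈ K) (hP : Alg.pi B ∈ K) {x : Fin n → (Alg.pi B).carrier}
    {b : (Alg.pi B).carrier} (h : ∀ i, b i ∈ f (B i) (hB i) fun j => x j i) :
    b ∈ f (Alg.pi B) hP x := by
  obtain ⟨φ, hpp, hφ⟩ := hf
  rw [hφ]
  refine hpp.realize_pi B _ _ fun i => ?_
  have snoc_apply : (fun a => (Fin.snoc x b : Fin _ → (Alg.pi B).carrier) a i) =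
      Fin.snoc (fun j => x j i) (b i) := Fin.comp_snoc (piProj B i) x b
  rw [Formula.boundedFormula_realize_eq_realize, snoc_apply, ← hφ]
  exact h i

variable {ι : Type u} {ar : ι → ℕ} {f : ∀ i, PartialFunOn K (ar i)}

theorem pi_mem_expClass (hprod : ClosedUnderProd K) (hf : ∀ i, IsPPDefinable (f i))
    {B : I → Alg (L.sum (newLang ar))} (hB : ∀ i, B i ∈ expClass K ar f) :
    Alg.pi B ∈ expClass K ar f := by
  choose hBK hBf using hB
  have hP : Alg.pi (fun i => algReduct (B i)) ∈ K := hprod I _ hBK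
  exact ⟨hP, fun i x => (hf i).mem_pi hBK hP fun k => hBf k i fun j => x j k⟩

end Products

section Interpolation

variable {K : Set (Alg L)}

theorem subset_SClosure (S : Set (Alg L)) : S ⊆ SClosure S :=
  fun A hA => ⟨A, hA, ⟨Embedding.refl L _⟩⟩

/-- The partial function `g` on `K` is interpolated in the class `S` by the single term `t`. -/
def InterpolatedBy {N : FirstOrder.Language.{u, u}} (S : Set (Alg (L.sum N))) {n : ℕ}
    (g : PartialFunOn K n) (t : (L.sum N).Term (Fin n)) : Prop :=
  ∀ B ∈ S, ∀ (hB : algReduct B ∈ K) (x : Fin n → B.carrier) (b : B.carrier),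
    b ∈ g (algReduct B) hB x → t.realize x = b

theorem IsBethCompanionVia.exists_interpolatedBy {ι : Type u} {ar : ι → ℕ}
    {f : ∀ i, PartialFunOn K (ar i)} {M : Set (Alg (L.sum (newLang ar)))}
    (h : IsBethCompanionVia K ar f M) (hprod : ClosedUnderProd K) {n : ℕ} (hn : 0 < n)
    {g : PartialFunOn K n} (hop : IsOperationOn g) (hpp : IsPPDefinable g) :
    ∃ t, InterpolatedBy (expClass K ar f) g t := by
  obtain ⟨⟨-, hf, rfl⟩, hinterp⟩ := h
  obtain ⟨T, hT⟩ := hinterp n hn g ⟨hpp.isImplicit, hop⟩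
  by_contra! hfail
  simp only [InterpolatedBy, not_forall] at hfail
  choose B hB hBK x b hb hne using hfail
  let P : Alg (L.sum (newLang ar)) := Alg.pi fun t : T => B t
  have hP : P ∈ expClass K ar f := pi_mem_expClass hprod (fun i => (hf i).2.1) fun t : T => hB t
  have b_mem : (fun t : T => b t) ∈ g (algReduct P) hP.1 fun j (t : T) => x t j :=
    hpp.mem_pi (B := fun t : T => algReduct (B t)) (fun t => hBK t) hP.1 fun t => hb t
  obtain ⟨t, ht, hreal⟩ := hT P (subset_SClosure _ hP) hP.1 _ _ b_mem
  let t' : T := ⟨t, ht⟩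
  exact hne t ((realize_pi_apply (fun t : T => B t) t _ t').symm.trans (congrFun hreal t'))

end Interpolation

section Expansions

variable [L.IsAlgebraic] {K : Set (Alg L)}

instance newLang_isAlgebraic {ι : Type u} (ar : ι → ℕ) : (newLang ar).IsAlgebraic :=
  fun _ => inferInstanceAs (IsEmpty PEmpty)

/-- The expansion of an algebra by operations that are total on it. -/
def expandAlg {ι : Type u} {ar : ι → ℕ} (f : ∀ i, PartialFunOn K (ar i)) (C : Alg L) (hC : C ∈ K)
    (hdom : ∀ i x, (f i C hC x).Dom) : Alg (L.sum (newLang ar)) where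
  carrier := C.carrier
  str :=
    letI : (newLang ar).Structure C.carrier :=
      { funMap := fun s x => (f s.1 C hC fun j => x (Fin.cast s.2 j)).get (hdom _ _)
        RelMap := fun r => isEmptyElim r }
    inferInstance

variable {ι₁ ι₂ : Type u} {ar₁ : ι₁ → ℕ} {ar₂ : ι₂ → ℕ}
  {f₁ : ∀ i, PartialFunOn K (ar₁ i)} {f₂ : ∀ i, PartialFunOn K (ar₂ i)}

theorem exists_embedding_expandAlg (hf : ∀ i, IsOperationOn (f₁ i))
    {B : Alg (L.sum (newLang ar₁))} (hB : B ∈ expClass K ar₁ f₁) {C : Alg L} (hC : C ∈ K)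
    (hdom : ∀ i x, (f₁ i C hC x).Dom) (e : (algReduct B).carrier ↪[L] C.carrier) :
    Nonempty (B.carrier ↪[L.sum (newLang ar₁)] (expandAlg f₁ C hC hdom).carrier) := by
  obtain ⟨hBK, hBf⟩ := hB
  let h : B.carrier →[L.sum (newLang ar₁)] (expandAlg f₁ C hC hdom).carrier :=
    { toFun := fun b => e b
      map_fun' := by
        rintro n (s | ⟨i, rfl⟩) x
        · exact e.map_fun s x
        · exact Part.mem_unique (hf i _ _ hBK hC e.toHom x _ (hBf i x)) (Part.get_mem (hdom i _))
      map_rel' := fun r => isEmptyElim r }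
  exact ⟨Embedding.ofInjective (f := h) e.injective⟩

theorem exists_embedding_expClass_isTotalOn (hsub : ClosedUnderSub K)
    (huprod : ClosedUnderUprod K) (har₁ : ∀ i, 0 < ar₁ i) (har₂ : ∀ i, 0 < ar₂ i)
    (hf₁ : ∀ i, IsImplicitOp (f₁ i)) (hf₂ : ∀ i, IsImplicitOp (f₂ i))
    (hext₁ : ∀ i, Extendable (f₁ i)) (hext₂ : ∀ i, Extendable (f₂ i))
    {A : Alg (L.sum (newLang ar₁))} (hA : A ∈ SClosure (expClass K ar₁ f₁)) :
    ∃ B ∈ expClass K ar₁ f₁, IsTotalOn f₂ (algReduct B) ∧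
      Nonempty (A.carrier ↪[L.sum (newLang ar₁)] B.carrier) := by
  obtain ⟨B, hB, ⟨e⟩⟩ := hA
  let f : ∀ i, PartialFunOn K (Sum.elim ar₁ ar₂ i) := Sum.rec f₁ f₂
  obtain ⟨C, ⟨hC, hdom⟩, ⟨e'⟩⟩ := exists_embedding_isTotalOn (f := f) hsub huprod
    (Sum.rec har₁ har₂) (Sum.rec hf₁ hf₂) (Sum.rec hext₁ hext₂) hB.1
  have hdom₁ : ∀ i x, (f₁ i C hC x).Dom := fun i => hdom (Sum.inl i)
  obtain ⟨e''⟩ := exists_embedding_expandAlg (fun i => (hf₁ i).2) hB hC hdom₁ e'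
  exact ⟨expandAlg f₁ C hC hdom₁, ⟨hC, fun i x => Part.get_mem (hdom₁ i x)⟩,
    ⟨hC, fun i => hdom (Sum.inr i)⟩, ⟨e''.comp e⟩⟩

end Expansions

section Reinterpretation

variable {L₁ L₂ : FirstOrder.Language.{u, u}} (ρ : ∀ n, L₂.Functions n → L₁.Term (Fin n))
  (τ : ∀ n, L₁.Functions n → L₂.Term (Fin n))

/-- An embedding of `L₁`-algebras, seen as an embedding of their reinterpretations. -/
def reinterpretEmbedding [L₂.IsAlgebraic] {A B : Alg L₁} (e : A.carrier ↪[L₁] B.carrier) :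
    (reinterpret ρ A).carrier ↪[L₂] (reinterpret ρ B).carrier :=
  let h : (reinterpret ρ A).carrier →[L₂] (reinterpret ρ B).carrier :=
    { toFun := fun a => e a
      map_fun' := fun _ _ => (HomClass.realize_term e).symm
      map_rel' := fun r => isEmptyElim r }
  Embedding.ofInjective (f := h) e.injective

variable [L₁.IsAlgebraic]

theorem reinterpret_reinterpret_eq_iff {A : Alg L₁} :
    reinterpret τ (reinterpret ρ A) = A ↔ ∀ (n : ℕ) (s : L₁.Functions n) (x : Fin n → A.carrier),
      (τ n s).realize (M := (reinterpret ρ A).carrier) x = Structure.funMap s x := by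
  obtain ⟨M, str⟩ := A
  constructor
  · intro h n s x
    have str_eq := eq_of_heq (Alg.mk.inj h).2
    exact congrArg (fun str : L₁.Structure M => str.funMap s x) str_eq
  · refine fun h => congrArg (@Alg.mk L₁ M) (Structure.ext ?_ ?_)
    · exact funext fun n => funext fun s => funext fun x => h n s x
    · exact funext fun n => funext fun r => isEmptyElim r

theorem reinterpret_reinterpret_eq_of_embedding [L₂.IsAlgebraic] {A B : Alg L₁}
    (e : A.carrier ↪[L₁] B.carrier) (hB : reinterpret τ (reinterpret ρ B) = B) :
    reinterpret τ (reinterpret ρ A) = A := by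
  rw [reinterpret_reinterpret_eq_iff] at hB ⊢
  intro n s x
  apply e.injective
  have realize_map : e ((τ n s).realize (M := (reinterpret ρ A).carrier) x) =
      (τ n s).realize (M := (reinterpret ρ B).carrier) (e ∘ x) :=
    (HomClass.realize_term (reinterpretEmbedding ρ e)).symm
  exact realize_map.trans ((hB n s (e ∘ x)).trans (e.map_fun s x).symm)

end Reinterpretation

section Translations

variable {N : FirstOrder.Language.{u, u}} {ι : Type u} {ar : ι → ℕ}

/-- The translation of symbols into terms that fixes the symbols of `L` and sends each new symbol
`gᵢ` to the term `t i`. -/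
def translation (t : ∀ i, (L.sum N).Term (Fin (ar i))) :
    ∀ n, (L.sum (newLang ar)).Functions n → (L.sum N).Term (Fin n)
  | _, Sum.inl s => Term.func (Sum.inl s) Term.var
  | _, Sum.inr ⟨i, rfl⟩ => t i

variable [L.IsAlgebraic]

/-- Reinterpretation along a `translation` does not change the `L`-reduct. -/
def reductReinterpretEquiv (t : ∀ i, (L.sum N).Term (Fin (ar i))) (B : Alg (L.sum N)) :
    (algReduct B).carrier ≃[L] (algReduct (reinterpret (translation t) B)).carrier where
  toEquiv := Equiv.refl B.carrier
  map_fun' _ _ := rfl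
  map_rel' r := isEmptyElim r

variable {K : Set (Alg L)} {ι₁ ι₂ : Type u} {ar₁ : ι₁ → ℕ} {ar₂ : ι₂ → ℕ}
  {f₁ : ∀ i, PartialFunOn K (ar₁ i)} {f₂ : ∀ i, PartialFunOn K (ar₂ i)}
  {t₁ : ∀ i, (L.sum (newLang ar₂)).Term (Fin (ar₁ i))}
  {t₂ : ∀ i, (L.sum (newLang ar₁)).Term (Fin (ar₂ i))}

theorem reinterpret_mem_expClass (hiso : ClosedUnderIso K) (hf₂ : ∀ i, IsOperationOn (f₂ i))
    (ht₂ : ∀ i, InterpolatedBy (expClass K ar₁ f₁) (f₂ i) (t₂ i))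
    {B : Alg (L.sum (newLang ar₁))} (hB : B ∈ expClass K ar₁ f₁)
    (htotal : IsTotalOn f₂ (algReduct B)) :
    reinterpret (translation t₂) B ∈ expClass K ar₂ f₂ := by
  obtain ⟨hBK, hdom⟩ := htotal
  let e := reductReinterpretEquiv t₂ B
  have hRK : algReduct (reinterpret (translation t₂) B) ∈ K := hiso _ _ hBK ⟨e⟩
  refine ⟨hRK, fun i x => ?_⟩
  have get_mem := Part.get_mem (hdom i x)
  have realize_mem : (t₂ i).realize (M := B.carrier) x ∈ f₂ i (algReduct B) hBK x :=
    (ht₂ i B hB hBK x _ get_mem).symm ▸ get_mem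
  exact hf₂ i _ _ hBK hRK e.toHom x _ realize_mem

theorem reinterpret_translation_translation_eq (hf₁ : ∀ i, IsOperationOn (f₁ i))
    (ht₁ : ∀ i, InterpolatedBy (expClass K ar₂ f₂) (f₁ i) (t₁ i))
    {B : Alg (L.sum (newLang ar₁))} (hB : B ∈ expClass K ar₁ f₁)
    (hR : reinterpret (translation t₂) B ∈ expClass K ar₂ f₂) :
    reinterpret (translation t₁) (reinterpret (translation t₂) B) = B := by
  rw [reinterpret_reinterpret_eq_iff]
  rintro n (s | ⟨i, rfl⟩) x
  · rfl
  · exact ht₁ i _ hR hR.1 x _ <|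
      hf₁ i _ _ hB.1 hR.1 (reductReinterpretEquiv t₂ B).toHom x _ (hB.2 i x)

theorem reinterpret_translation_of_mem_ppExpansion (hK : IsQuasivariety K)
    {M₁ : Set (Alg (L.sum (newLang ar₁)))} {M₂ : Set (Alg (L.sum (newLang ar₂)))}
    (h₁ : IsPPExpansionVia K ar₁ f₁ M₁) (h₂ : IsPPExpansionVia K ar₂ f₂ M₂)
    (ht₁ : ∀ i, InterpolatedBy (expClass K ar₂ f₂) (f₁ i) (t₁ i))
    (ht₂ : ∀ i, InterpolatedBy (expClass K ar₁ f₁) (f₂ i) (t₂ i))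
    {A : Alg (L.sum (newLang ar₁))} (hA : A ∈ M₁) :
    reinterpret (translation t₂) A ∈ M₂ ∧
      reinterpret (translation t₁) (reinterpret (translation t₂) A) = A := by
  obtain ⟨hiso, hsub, -, huprod⟩ := hK
  obtain ⟨har₁, hf₁, rfl⟩ := h₁
  obtain ⟨har₂, hf₂, rfl⟩ := h₂
  obtain ⟨B, hB, htotal, ⟨e⟩⟩ := exists_embedding_expClass_isTotalOn hsub huprod har₁ har₂
    (fun i => (hf₁ i).isImplicitOp) (fun i => (hf₂ i).isImplicitOp)
    (fun i => (hf₁ i).2.2) (fun i => (hf₂ i).2.2) hA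
  have hR : reinterpret (translation t₂) B ∈ expClass K ar₂ f₂ :=
    reinterpret_mem_expClass hiso (fun i => (hf₂ i).1) ht₂ hB htotal
  have hroundtrip : reinterpret (translation t₁) (reinterpret (translation t₂) B) = B :=
    reinterpret_translation_translation_eq (fun i => (hf₁ i).1) ht₁ hB hR
  exact ⟨⟨_, hR, ⟨reinterpretEmbedding _ e⟩⟩,
    reinterpret_reinterpret_eq_of_embedding _ _ e hroundtrip⟩

end Translations

/-- All the Beth companions of a quasivariety `K` are faithfully term
equivalent relative to `K`. -/
theorem statement_14 {L : FirstOrder.Language.{u, u}} [L.IsAlgebraic]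
    {K : Set (Alg L)} (hK : IsQuasivariety K)
    {ι₁ ι₂ : Type u} (ar₁ : ι₁ → ℕ) (ar₂ : ι₂ → ℕ)
    (f₁ : ∀ i, PartialFunOn K (ar₁ i)) (f₂ : ∀ i, PartialFunOn K (ar₂ i))
    (M₁ : Set (Alg (L.sum (newLang ar₁)))) (M₂ : Set (Alg (L.sum (newLang ar₂))))
    (h₁ : IsBethCompanionVia K ar₁ f₁ M₁) (h₂ : IsBethCompanionVia K ar₂ f₂ M₂) :
    FaithfullyTermEquivRel L M₁ M₂ := by
  obtain ⟨har₁, hf₁, -⟩ := h₁.1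
  obtain ⟨har₂, hf₂, -⟩ := h₂.1
  choose t₁ ht₁ using fun i => h₂.exists_interpolatedBy hK.2.2.1 (har₁ i) (hf₁ i).1 (hf₁ i).2.1
  choose t₂ ht₂ using fun i => h₁.exists_interpolatedBy hK.2.2.1 (har₂ i) (hf₂ i).1 (hf₂ i).2.1
  have to₂ {A} (hA : A ∈ M₁) :=
    reinterpret_translation_of_mem_ppExpansion hK h₁.1 h₂.1 ht₁ ht₂ hA
  have to₁ {B} (hB : B ∈ M₂) :=
    reinterpret_translation_of_mem_ppExpansion hK h₂.1 h₁.1 ht₂ ht₁ hB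
  exact ⟨translation t₁, translation t₂, fun _ _ => rfl, fun _ _ => rfl,
    fun _ hA => (to₂ hA).1, fun _ hB => (to₁ hB).1,
    fun _ hA => (to₂ hA).2, fun _ hB => (to₁ hB).2⟩

end Impl
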